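/- arXiv:math/0205040 — 2 statements merged into one kernel-verified Lean document; each statement's English description precedes it below -/
import Mathlib

section
/- For every natural number n ≥ 1, the free Burnside group B(n,3) of exponent 3 on n generators is finite, of cardinality exactly 3^(n + C(n,2) + C(n,3)), where C(n,k) denotes the binomial coefficient. -/
/-- The free Burnside group `B(n,3)` of exponent 3 on `n` generators:
the free group on `n` generators modulo the normal closure of all cubes. -/
abbrev Burnside3 (n : ℕ) : Type :=
  FreeGroup (Fin n) ⧸ Subgroup.normalClosure {w : FreeGroup (Fin n) | ∃ v, w = v ^ 3}

/-!
In a group of exponent three every element `x` commutes with its conjugates, and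
`x * gxg⁻¹ * g²xg⁻² = 1`. So the normal closure `M` of one generator of `B(n + 1, 3)` is an
elementary abelian `3`-group, and conjugation makes it a cyclic `B(n, 3)`-module on which
`(g - 1)² = 0` for every `g`. Polarizing, the operators `g - 1` anticommute and any product of three
of them vanishes, so `M` is a quotient of the exterior algebra on `n` generators over the field with
three elements, truncated to degrees at most two.

Conversely, `B(n, 3)` acts on this truncated algebra `L`, its `i`-th generator acting as
multiplication by `1 + eᵢ`, and since every operator in the image has the form `1 + N` with
`N² = 0`, the semidirect product of `L` by `B(n, 3)` has exponent three. Hence it is `B(n + 1, 3)`,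
and the order follows by induction from `dim L = 1 + n + C(n, 2)`.
-/

section ExponentThree

variable {G : Type*} [Group G]

theorem mul_conj_mul_conj_sq_eq_one (hG : ∀ g : G, g ^ 3 = 1) (g x : G) :
    x * (g * x * g⁻¹) * (g ^ 2 * x * (g ^ 2)⁻¹) = 1 :=
  calc x * (g * x * g⁻¹) * (g ^ 2 * x * (g ^ 2)⁻¹) = (x * g) ^ 3 * (g ^ 3)⁻¹ := by
        simp only [pow_succ, pow_zero]; group
    _ = 1 := by rw [hG, hG, inv_one, mul_one]

theorem commute_conj_of_pow_three (hG : ∀ g : G, g ^ 3 = 1) (g x : G) :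
    Commute x (g * x * g⁻¹) := by
  have h_inv : (g ^ 2 * x * (g ^ 2)⁻¹)⁻¹ = x * (g * x * g⁻¹) :=
    inv_eq_of_mul_eq_one_left (mul_conj_mul_conj_sq_eq_one hG g x)
  have h_inv' : g ^ 2 * x * (g ^ 2)⁻¹ = x⁻¹ * (g * x * g⁻¹)⁻¹ := by
    have h := eq_inv_of_mul_eq_one_left (mul_conj_mul_conj_sq_eq_one hG g x⁻¹)
    simpa only [conj_inv, inv_inv] using h.symm
  calc x * (g * x * g⁻¹) = (g ^ 2 * x * (g ^ 2)⁻¹)⁻¹ := h_inv.symm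
    _ = (x⁻¹ * (g * x * g⁻¹)⁻¹)⁻¹ := by rw [h_inv']
    _ = g * x * g⁻¹ * x := by rw [mul_inv_rev, inv_inv, inv_inv]

theorem isMulCommutative_normalClosure_singleton (hG : ∀ g : G, g ^ 3 = 1) (x : G) :
    IsMulCommutative (Subgroup.normalClosure {x}) := by
  refine Subgroup.isMulCommutative_closure fun a ha b hb => ?_
  have hxa : IsConj x a := by simpa [Group.mem_conjugatesOfSet_iff] using ha
  have hxb : IsConj x b := by simpa [Group.mem_conjugatesOfSet_iff] using hb
  obtain ⟨g, rfl⟩ := isConj_iff.1 (hxa.symm.trans hxb)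
  exact commute_conj_of_pow_three hG g a

end ExponentThree

theorem isUnit_two_of_three_eq_zero {E : Type*} [Ring E] (h3 : (3 : E) = 0) :
    IsUnit (2 : E) := by
  have h : (2 : E) = -1 := eq_neg_of_add_eq_zero_left (by rw [two_add_one_eq_three, h3])
  exact h ▸ isUnit_one.neg

theorem three_eq_zero_of_algebra {R E : Type*} [CommRing R] [Ring E] [Algebra R E]
    (h3 : (3 : R) = 0) : (3 : E) = 0 := by
  rw [← map_ofNat (algebraMap R E) 3, h3, map_zero]

theorem sub_one_sq_eq_zero_iff {E : Type*} [Ring E] (h3 : (3 : E) = 0) (a : E) :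
    (a - 1) ^ 2 = 0 ↔ 1 + a + a ^ 2 = 0 := by
  have h : (a - 1) ^ 2 = 1 + a + a ^ 2 - 3 * a := by noncomm_ring
  rw [h, h3, zero_mul, sub_zero]

theorem pow_three_eq_one_of_sub_one_sq_eq_zero {E : Type*} [Ring E] (h3 : (3 : E) = 0) {a : E}
    (ha : (a - 1) ^ 2 = 0) : a ^ 3 = 1 := by
  linear_combination (norm := noncomm_ring) ha * (a - 1) + h3 * (a ^ 2 - a)

/-- A homomorphism from a group to the multiplicative monoid of a ring is quadratic if every
`ρ g - 1` squares to zero. -/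
def IsQuadratic {G E : Type*} [Group G] [Ring E] (ρ : G →* E) : Prop :=
  ∀ g, (ρ g - 1) ^ 2 = 0

namespace IsQuadratic

variable {G E : Type*} [Group G] [Ring E] {ρ : G →* E}

theorem map_inv (hρ : IsQuadratic ρ) (g : G) : ρ g⁻¹ = 1 - (ρ g - 1) := by
  have h_left : ρ g⁻¹ * ρ g = 1 := by rw [← map_mul, inv_mul_cancel, map_one]
  have h_right : ρ g * (1 - (ρ g - 1)) = 1 := by
    linear_combination (norm := noncomm_ring) -hρ g
  exact left_inv_eq_right_inv h_left h_right

-- Replacing `g` or `h` by its inverse changes the sign of `ρ g - 1` or `ρ h - 1`, so the signed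
-- sum of the four resulting instances of `(ρ (g * h) - 1) ^ 2 = 0` isolates the bilinear part.
theorem sub_one_mul_sub_one_eq_neg (h2 : IsUnit (2 : E)) (hρ : IsQuadratic ρ) (g h : G) :
    (ρ g - 1) * (ρ h - 1) = -((ρ h - 1) * (ρ g - 1)) := by
  have h₁ := hρ (g * h)
  have h₂ := hρ (g⁻¹ * h)
  have h₃ := hρ (g * h⁻¹)
  have h₄ := hρ (g⁻¹ * h⁻¹)
  simp only [map_mul, hρ.map_inv] at h₁ h₂ h₃ h₄
  have h_four : (2 : E) * (2 * ((ρ g - 1) * (ρ h - 1) + (ρ h - 1) * (ρ g - 1))) = 0 := by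
    linear_combination (norm := skip) h₁ - h₂ - h₃ + h₄
    simp only [two_mul]
    noncomm_ring
  have h_sum := h2.mul_right_eq_zero.1 (h2.mul_right_eq_zero.1 h_four)
  exact eq_neg_of_add_eq_zero_left h_sum

-- With `u`, `v`, `w` the values of `ρ - 1` at `g`, `h`, `k`, the value at `g * h` is
-- `u + v + u * v`; it anticommutes with `w`, as do `u` and `v`, so `u * v` both commutes and
-- anticommutes with `w`.
theorem sub_one_mul_sub_one_mul_sub_one_eq_zero (h2 : IsUnit (2 : E)) (hρ : IsQuadratic ρ)
    (g h k : G) : (ρ g - 1) * (ρ h - 1) * (ρ k - 1) = 0 := by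
  have hgk := hρ.sub_one_mul_sub_one_eq_neg h2 g k
  have hhk := hρ.sub_one_mul_sub_one_eq_neg h2 h k
  have hghk := hρ.sub_one_mul_sub_one_eq_neg h2 (g * h) k
  rw [map_mul] at hghk
  have h_two : (2 : E) * ((ρ g - 1) * (ρ h - 1) * (ρ k - 1)) = 0 := by
    linear_combination (norm := noncomm_ring)
      hghk - hgk - hhk - hgk * (ρ h - 1) + (ρ g - 1) * hhk
  exact h2.mul_right_eq_zero.1 h_two

variable {R : Type*} [CommRing R] [Algebra R E]

open Submodule

theorem mul_self_eq_zero_of_mem_span (h2 : IsUnit (2 : E)) (hρ : IsQuadratic ρ) {a : E}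
    (ha : a ∈ span R (Set.range fun g => ρ g - 1)) : a * a = 0 := by
  have h_anticomm : ∀ b ∈ span R (Set.range fun g => ρ g - 1),
      ∀ c ∈ span R (Set.range fun g => ρ g - 1), b * c + c * b = 0 := by
    intro b hb c hc
    induction hb, hc using span_induction₂ with
    | mem_mem b c hb hc =>
      obtain ⟨⟨g, rfl⟩, ⟨h, rfl⟩⟩ := And.intro hb hc
      exact add_eq_zero_iff_eq_neg.2 (hρ.sub_one_mul_sub_one_eq_neg h2 g h)
    | zero_left => simp
    | zero_right => simp
    | add_left b b' c _ _ _ h h' => linear_combination (norm := noncomm_ring) h + h'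
    | add_right b c c' _ _ _ h h' => linear_combination (norm := noncomm_ring) h + h'
    | smul_left r b c _ _ h => rw [smul_mul_assoc, mul_smul_comm, ← smul_add, h, smul_zero]
    | smul_right r b c _ _ h => rw [smul_mul_assoc, mul_smul_comm, ← smul_add, h, smul_zero]
  exact h2.mul_right_eq_zero.1 ((two_mul _).trans (h_anticomm a ha a ha))

theorem mul_mul_eq_zero_of_mem_span (h2 : IsUnit (2 : E)) (hρ : IsQuadratic ρ) {a b c : E}
    (ha : a ∈ span R (Set.range fun g => ρ g - 1)) (hb : b ∈ span R (Set.range fun g => ρ g - 1))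
    (hc : c ∈ span R (Set.range fun g => ρ g - 1)) : a * b * c = 0 := by
  have h_mem := mul_mem_mul (mul_mem_mul ha hb) hc
  rw [span_mul_span, span_mul_span] at h_mem
  refine (mem_bot R).1 (span_le.2 ?_ h_mem)
  rintro _ ⟨_, ⟨_, ⟨g, rfl⟩, _, ⟨h, rfl⟩, rfl⟩, _, ⟨k, rfl⟩, rfl⟩
  exact hρ.sub_one_mul_sub_one_mul_sub_one_eq_zero h2 g h k

end IsQuadratic

/-- The truncation of the exterior algebra of `V` to degrees at most two. -/
abbrev TruncatedExterior (R V : Type*) [CommRing R] [AddCommGroup V] [Module R V] : Type _ :=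
  R × V × ⋀[R]^2 V

namespace TruncatedExterior

variable {R V : Type*} [CommRing R] [AddCommGroup V] [Module R V]

/-- The exterior product of two vectors, as a bilinear map. -/
def wedge : V →ₗ[R] V →ₗ[R] ⋀[R]^2 V :=
  LinearMap.mk₂ R (fun v w => exteriorPower.ιMulti R 2 ![v, w])
    (fun v v' w => AlternatingMap.map_vecCons_add _ ![w] v v')
    (fun c v w => AlternatingMap.map_vecCons_smul _ ![w] c v)
    (fun v w w' => ((exteriorPower.ιMulti R 2).curryLeft v).map_vecCons_add ![] w w')
    (fun c v w => ((exteriorPower.ιMulti R 2).curryLeft v).map_vecCons_smul ![] c w)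

theorem wedge_apply (v w : V) : wedge v w = exteriorPower.ιMulti R 2 ![v, w] := rfl

theorem wedge_self (v : V) : wedge (R := R) v v = 0 :=
  (exteriorPower.ιMulti R 2).map_eq_zero_of_eq ![v, v] (i := 0) (j := 1) rfl zero_ne_one

theorem finrank_eq [StrongRankCondition R] [Module.Free R V] [Module.Finite R V] :
    Module.finrank R (TruncatedExterior R V) =
      1 + Module.finrank R V + (Module.finrank R V).choose 2 := by
  have := nontrivial_of_invariantBasisNumber R
  rw [Module.finrank_prod, Module.finrank_prod, Module.finrank_self, exteriorPower.finrank_eq,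
    add_assoc]

/-- Left multiplication by an element of the augmentation ideal `V × ⋀² V` of the truncated
exterior algebra, linearly in that element. -/
def mulLeft : V × ⋀[R]^2 V →ₗ[R] Module.End R (TruncatedExterior R V) :=
  LinearMap.mk₂ R (fun a l => (0, l.1 • a.1, wedge a.1 l.2.1 + l.1 • a.2))
    (fun a b l => by ext <;> simp; abel)
    (fun c a l => by ext <;> simp [smul_comm c])
    (fun a l l' => by ext <;> simp [add_smul]; abel)
    (fun c a l => by ext <;> simp [mul_smul])

theorem mulLeft_apply (a : V × ⋀[R]^2 V) (l : TruncatedExterior R V) :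
    mulLeft a l = (0, l.1 • a.1, wedge a.1 l.2.1 + l.1 • a.2) := rfl

theorem mulLeft_mul_mulLeft (a b : V × ⋀[R]^2 V) :
    mulLeft a * mulLeft b = mulLeft (0, wedge a.1 b.1) := by
  refine LinearMap.ext fun l => ?_
  simp [mulLeft_apply]

theorem mulLeft_sq (a : V × ⋀[R]^2 V) : mulLeft a ^ 2 = 0 := by
  rw [sq, mulLeft_mul_mulLeft, wedge_self, ← Prod.zero_eq_mk, map_zero]

theorem eq_top_of_one_mem (W : Submodule R (TruncatedExterior R V)) {s : Set V}
    (hs : Submodule.span R s = ⊤) (h_one : (1, 0, 0) ∈ W)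
    (h_mul : ∀ v ∈ s, ∀ l ∈ W, mulLeft (v, 0) l ∈ W) : W = ⊤ := by
  have h_stable : ∀ v, ∀ l ∈ W, mulLeft (v, 0) l ∈ W := by
    intro v l hl
    have h_le : Submodule.span R s ≤
        W.comap (((mulLeft (R := R)).flip l) ∘ₗ LinearMap.inl R V (⋀[R]^2 V)) :=
      Submodule.span_le.2 fun v hv => h_mul v hv l hl
    exact h_le (hs ▸ Submodule.mem_top)
  have h_deg_one (v : V) : ((0, v, 0) : TruncatedExterior R V) ∈ W := by
    simpa [mulLeft_apply] using h_stable v _ h_one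
  have h_deg_two (ω : ⋀[R]^2 V) : ((0, 0, ω) : TruncatedExterior R V) ∈ W := by
    have h_le : Submodule.span R (Set.range (exteriorPower.ιMulti R 2)) ≤
        W.comap (LinearMap.inr R R (V × ⋀[R]^2 V) ∘ₗ LinearMap.inr R V (⋀[R]^2 V)) := by
      refine Submodule.span_le.2 ?_
      rintro _ ⟨v, rfl⟩
      have h := h_stable (v 0) _ (h_deg_one (v 1))
      have hv : ![v 0, v 1] = v := by ext i; fin_cases i <;> rfl
      simpa [mulLeft_apply, wedge_apply, hv] using h
    exact h_le (exteriorPower.ιMulti_span R 2 V ▸ Submodule.mem_top)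
  refine eq_top_iff.2 fun l _ => ?_
  have h_sum : l = l.1 • (1, 0, 0) + (0, l.2.1, 0) + (0, 0, l.2.2) := by ext <;> simp
  rw [h_sum]
  exact add_mem (add_mem (W.smul_mem _ h_one) (h_deg_one _)) (h_deg_two _)

theorem one_add_mulLeft_mul (a b : V × ⋀[R]^2 V) :
    (1 + mulLeft a) * (1 + mulLeft b) = 1 + mulLeft (a + b + (0, wedge a.1 b.1)) := by
  rw [map_add, map_add, ← mulLeft_mul_mulLeft]
  noncomm_ring

theorem one_add_mulLeft_mul_one_add_mulLeft_neg (a : V × ⋀[R]^2 V) :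
    (1 + mulLeft a) * (1 + mulLeft (-a)) = 1 := by
  rw [one_add_mulLeft_mul, Prod.fst_neg, map_neg, wedge_self, neg_zero, ← Prod.zero_eq_mk, add_zero,
    add_neg_cancel, map_zero, add_zero]

/-- The group of left multiplications by elements of the truncated exterior algebra with constant
term `1`. -/
def unipotent (R V : Type*) [CommRing R] [AddCommGroup V] [Module R V] :
    Subgroup (Module.End R (TruncatedExterior R V))ˣ where
  carrier := {u | ∃ a, (u : Module.End R (TruncatedExterior R V)) = 1 + mulLeft a}
  one_mem' := ⟨0, by rw [map_zero, add_zero, Units.val_one]⟩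
  mul_mem' := by
    rintro u v ⟨a, ha⟩ ⟨b, hb⟩
    exact ⟨_, by rw [Units.val_mul, ha, hb, one_add_mulLeft_mul]⟩
  inv_mem' := by
    rintro u ⟨a, ha⟩
    refine ⟨-a, Units.inv_eq_of_mul_eq_one_right ?_⟩
    rw [ha, one_add_mulLeft_mul_one_add_mulLeft_neg]

/-- Left multiplication by `1 + a`, as an element of the unipotent group. -/
def oneAddMulLeft (a : V × ⋀[R]^2 V) : unipotent R V :=
  ⟨⟨1 + mulLeft a, 1 + mulLeft (-a), one_add_mulLeft_mul_one_add_mulLeft_neg a, by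
    simpa only [neg_neg] using one_add_mulLeft_mul_one_add_mulLeft_neg (-a)⟩, a, rfl⟩

theorem unipotent_sub_one_sq (u : unipotent R V) :
    ((u : (Module.End R (TruncatedExterior R V))ˣ) - 1 : Module.End R (TruncatedExterior R V)) ^ 2
      = 0 := by
  obtain ⟨u, a, ha⟩ := u
  rw [ha]
  exact (congrArg (· ^ 2) (add_sub_cancel_left 1 (mulLeft a))).trans (mulLeft_sq a)

theorem unipotent_pow_three (h3 : (3 : R) = 0) (u : unipotent R V) : u ^ 3 = 1 := by
  have h := pow_three_eq_one_of_sub_one_sq_eq_zero (E := Module.End R (TruncatedExterior R V))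
    (three_eq_zero_of_algebra h3) (unipotent_sub_one_sq u)
  refine Subtype.ext (Units.ext ?_)
  rw [Subgroup.coe_pow, Units.val_pow_eq_pow_val]
  exact h

section Lift

variable {E : Type*} [Ring E] [Algebra R E] (f : V →ₗ[R] E) (hf : ∀ v, f v * f v = 0)

/-- The linear extension to the truncated exterior algebra of a linear map with square-zero values
in an algebra, obtained from the universal property of the exterior algebra. It respects products
only up to terms of degree three. -/
def lift : TruncatedExterior R V →ₗ[R] E :=
  (Algebra.linearMap R E).coprod
    (f.coprod ((ExteriorAlgebra.lift R ⟨f, hf⟩).toLinearMap ∘ₗ (⋀[R]^2 V).subtype))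

theorem lift_one : lift f hf (1, 0, 0) = 1 := by
  simp [lift]

theorem lift_mulLeft (h_triple : ∀ v w x, f v * f w * f x = 0) (v : V)
    (l : TruncatedExterior R V) :
    lift f hf (mulLeft (v, 0) l) = f v * lift f hf l := by
  have h_ιMulti (w : Fin 2 → V) :
      ExteriorAlgebra.lift R ⟨f, hf⟩ (exteriorPower.ιMulti R 2 w) = f (w 0) * f (w 1) := by
    simp [ExteriorAlgebra.ιMulti_apply, Matrix.vecTail]
  have h_deg_three : LinearMap.mulLeft R (f v) ∘ₗ
      (ExteriorAlgebra.lift R ⟨f, hf⟩).toLinearMap ∘ₗ (⋀[R]^2 V).subtype = 0 := by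
    refine exteriorPower.linearMap_ext (AlternatingMap.ext fun w => ?_)
    simpa [h_ιMulti, mul_assoc, -exteriorPower.ιMulti_apply_coe] using h_triple v (w 0) (w 1)
  have h_deg_three_apply : f v * ExteriorAlgebra.lift R ⟨f, hf⟩ l.2.2 = 0 :=
    LinearMap.congr_fun h_deg_three l.2.2
  simp [lift, mulLeft_apply, wedge_apply, h_ιMulti, -exteriorPower.ιMulti_apply_coe, mul_add,
    h_deg_three_apply, Algebra.smul_def, Algebra.commutes]

end Lift

end TruncatedExterior

section SemidirectProduct

variable {k G V : Type*} [CommRing k] [Group G] [AddCommGroup V] [Module k V]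

/-- The action of `G` on the additive group of a representation, written multiplicatively so that
semidirect products can be formed with it. -/
def mulAutOfRepresentation (ρ : Representation k G V) : G →* MulAut (Multiplicative V) where
  toFun g := AddEquiv.toMultiplicative
    (LinearMap.GeneralLinearGroup.generalLinearEquiv k V (ρ.toHomUnits g)).toAddEquiv
  map_one' := by ext; simp
  map_mul' g h := by ext; simp

theorem mulAutOfRepresentation_apply (ρ : Representation k G V) (g : G) (v : Multiplicative V) :
    mulAutOfRepresentation ρ g v = Multiplicative.ofAdd (ρ g v.toAdd) := rfl

theorem semidirectProduct_pow_three (h3 : (3 : k) = 0) (hG : ∀ g : G, g ^ 3 = 1)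
    {ρ : Representation k G V} (hρ : IsQuadratic ρ)
    (x : Multiplicative V ⋊[mulAutOfRepresentation ρ] G) : x ^ 3 = 1 := by
  obtain ⟨v, g⟩ := x
  have h_norm : v.toAdd + ρ g v.toAdd + ρ g (ρ g v.toAdd) = 0 := by
    have h3_end : (3 : Module.End k V) = 0 := three_eq_zero_of_algebra h3
    have h := (sub_one_sq_eq_zero_iff h3_end (ρ g)).1 (hρ g)
    simpa [sq] using LinearMap.congr_fun h v.toAdd
  ext
  · simpa [pow_succ, mulAutOfRepresentation_apply] using h_norm
  · simpa [pow_succ] using hG g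

end SemidirectProduct

section ConjugationRepresentation

open scoped IsMulCommutative

variable {G : Type*} [Group G] (M : Subgroup G) [M.Normal] [IsMulCommutative M]

/-- The conjugation action of a group on a commutative normal subgroup of exponent dividing `n`, as
a representation over the integers modulo `n`. -/
def conjRepresentation (n : ℕ) [Module (ZMod n) (Additive M)] :
    Representation (ZMod n) G (Additive M) where
  toFun g := AddMonoidHom.toZModLinearMap n
    (MonoidHom.toAdditive (MulAut.conjNormal g : M ≃* M).toMonoidHom)
  map_one' := by ext; simp
  map_mul' g h := by ext; simp

theorem coe_conjRepresentation (n : ℕ) [Module (ZMod n) (Additive M)] (g : G) (m : Additive M) :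
    ((conjRepresentation M n g m).toMul : G) = g * m.toMul * g⁻¹ :=
  MulAut.conjNormal_apply g m.toMul

theorem conjRepresentation_isQuadratic (hG : ∀ g : G, g ^ 3 = 1)
    [Module (ZMod 3) (Additive M)] : IsQuadratic (conjRepresentation M 3) := by
  intro g
  have h3 : (3 : Module.End (ZMod 3) (Additive M)) = 0 :=
    three_eq_zero_of_algebra (R := ZMod 3) rfl
  rw [sub_one_sq_eq_zero_iff h3]
  ext m
  have h := mul_conj_mul_conj_sq_eq_one hG g m.toMul
  simpa [← map_pow, coe_conjRepresentation] using h

end ConjugationRepresentation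

namespace Burnside3

open SemidirectProduct TruncatedExterior

variable {n : ℕ} {H : Type*} [Group H]

/-- The canonical generators of the free Burnside group. -/
def of (i : Fin n) : Burnside3 n := QuotientGroup.mk (FreeGroup.of i)

theorem pow_three (g : Burnside3 n) : g ^ 3 = 1 := by
  induction g using QuotientGroup.induction_on with
  | H w => exact (QuotientGroup.eq_one_iff _).2 (Subgroup.subset_normalClosure ⟨w, rfl⟩)

/-- The universal property of the free Burnside group: a family of elements of a group of exponent
three extends to a homomorphism. -/
def lift (hH : ∀ h : H, h ^ 3 = 1) (y : Fin n → H) : Burnside3 n →* H :=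
  QuotientGroup.lift _ (FreeGroup.lift y) <| Subgroup.normalClosure_le_normal <| by
    rintro _ ⟨w, rfl⟩
    exact (map_pow _ _ _).trans (hH _)

theorem lift_of (hH : ∀ h : H, h ^ 3 = 1) (y : Fin n → H) (i : Fin n) : lift hH y (of i) = y i :=
  FreeGroup.lift_apply_of

theorem hom_ext {f g : Burnside3 n →* H} (h : ∀ i, f (of i) = g (of i)) : f = g :=
  QuotientGroup.monoidHom_ext _ (FreeGroup.ext_hom _ _ h)

theorem induction_on {p : Burnside3 n → Prop} (g : Burnside3 n) (one : p 1) (of : ∀ i, p (of i))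
    (mul : ∀ g h, p g → p h → p (g * h)) : p g := by
  induction g using QuotientGroup.induction_on with
  | H w =>
    induction w using FreeGroup.induction_on with
    | C1 => exact one
    | of i => exact of i
    | inv_of i hi =>
      have h_inv : (Burnside3.of i)⁻¹ = Burnside3.of i * Burnside3.of i :=
        inv_eq_of_mul_eq_one_left (by rw [← sq, ← pow_succ, pow_three])
      change p (Burnside3.of i)⁻¹
      exact h_inv ▸ mul _ _ hi hi
    | mul v w hv hw => exact mul _ _ hv hw

/-- The truncated exterior algebra on `n` generators over the field with three elements. -/
abbrev ExteriorModule (n : ℕ) : Type :=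
  TruncatedExterior (ZMod 3) (Fin n → ZMod 3)

/-- The representation of the free Burnside group on the truncated exterior algebra in which the
`i`-th generator acts as left multiplication by `1 + eᵢ`. -/
def exteriorRep (n : ℕ) : Representation (ZMod 3) (Burnside3 n) (ExteriorModule n) :=
  (Units.coeHom _).comp <| (unipotent (ZMod 3) (Fin n → ZMod 3)).subtype.comp <|
    lift (unipotent_pow_three rfl) fun i => oneAddMulLeft (Pi.single i 1, 0)

theorem exteriorRep_of (i : Fin n) : exteriorRep n (of i) = 1 + mulLeft (Pi.single i 1, 0) := by
  simp [exteriorRep, lift_of, oneAddMulLeft]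

theorem exteriorRep_isQuadratic (n : ℕ) :
    IsQuadratic (E := Module.End (ZMod 3) (ExteriorModule n)) (exteriorRep n) :=
  fun _ => unipotent_sub_one_sq _

theorem exists_equivariant_map_one_eq {A : Type*} [AddCommGroup A] [Module (ZMod 3) A]
    {σ : Representation (ZMod 3) (Burnside3 n) A} (hσ : IsQuadratic σ) (x : A) :
    ∃ Φ : ExteriorModule n →ₗ[ZMod 3] A,
      Φ (1, 0, 0) = x ∧ ∀ g l, Φ (exteriorRep n g l) = σ g (Φ l) := by
  have h2 : IsUnit (2 : Module.End (ZMod 3) A) :=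
    isUnit_two_of_three_eq_zero (three_eq_zero_of_algebra (R := ZMod 3) rfl)
  let f := Fintype.linearCombination (ZMod 3) fun i => σ (of i) - 1
  have hf_span (v) : f v ∈ Submodule.span (ZMod 3) (Set.range fun g => σ g - 1) := by
    rw [Fintype.linearCombination_apply]
    exact sum_mem fun i _ => Submodule.smul_mem _ _ (Submodule.subset_span ⟨of i, rfl⟩)
  have hf_sq (v) : f v * f v = 0 := hσ.mul_self_eq_zero_of_mem_span h2 (hf_span v)
  have hf_triple (u v w) : f u * f v * f w = 0 :=
    hσ.mul_mul_eq_zero_of_mem_span h2 (hf_span u) (hf_span v) (hf_span w)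
  refine ⟨LinearMap.applyₗ x ∘ₗ TruncatedExterior.lift f hf_sq, ?_, fun g => ?_⟩
  · simp [lift_one]
  induction g using induction_on with
  | one => simp
  | of i =>
    intro l
    have hfi : f (Pi.single i 1) = σ (of i) - 1 := by simp [f]
    simp [exteriorRep_of, lift_mulLeft f hf_sq hf_triple, hfi]
  | mul g h hg hh => intro l; simp only [map_mul, Module.End.mul_apply, hg, hh]

/-- The semidirect product of the truncated exterior algebra by the free Burnside group, a model of
the free Burnside group on one more generator. -/
abbrev ExteriorSemidirect (n : ℕ) : Type :=
  Multiplicative (ExteriorModule n) ⋊[mulAutOfRepresentation (exteriorRep n)] Burnside3 n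

namespace ExteriorSemidirect

/-- The element of the semidirect product given by the unit of the truncated exterior algebra. -/
def root (n : ℕ) : ExteriorSemidirect n := inl (Multiplicative.ofAdd (1, 0, 0))

theorem pow_three (x : ExteriorSemidirect n) : x ^ 3 = 1 :=
  semidirectProduct_pow_three rfl Burnside3.pow_three (exteriorRep_isQuadratic n) x

open scoped IsMulCommutative in
theorem exists_hom (hH : ∀ h : H, h ^ 3 = 1) (s : Burnside3 n →* H) (x : H) :
    ∃ Ψ : ExteriorSemidirect n →* H, Ψ (root n) = x ∧ Ψ.comp inr = s := by
  let M := Subgroup.normalClosure {x}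
  have : IsMulCommutative M := isMulCommutative_normalClosure_singleton hH x
  let : Module (ZMod 3) (Additive M) :=
    AddCommGroup.zmodModule fun m => Subtype.ext (hH m.toMul)
  have hσ : IsQuadratic ((conjRepresentation M 3).comp s) :=
    fun g => conjRepresentation_isQuadratic M hH (s g)
  obtain ⟨Φ, hΦ_one, hΦ⟩ := exists_equivariant_map_one_eq hσ
    (Additive.ofMul ⟨x, Subgroup.subset_normalClosure rfl⟩)
  let Φ_mul : Multiplicative (ExteriorModule n) →* M :=
    AddMonoidHom.toMultiplicativeLeft Φ.toAddMonoidHom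
  refine ⟨SemidirectProduct.lift (M.subtype.comp Φ_mul) s
    fun g => MonoidHom.ext fun l => ?_, ?_, lift_comp_inr _ _ _⟩
  · simp [Φ_mul, mulAutOfRepresentation_apply, hΦ, coe_conjRepresentation]
  · simp [Φ_mul, root, hΦ_one]

theorem hom_ext {f g : ExteriorSemidirect n →* H} (h_root : f (root n) = g (root n))
    (h_inr : f.comp inr = g.comp inr) : f = g := by
  let W := AddSubgroup.toZModSubmodule 3
    (Subgroup.toAddSubgroup' ((f.comp inl).eqLocus (g.comp inl)))
  have hW : W = ⊤ := by
    refine eq_top_of_one_mem W (Pi.basisFun (ZMod 3) (Fin n)).span_eq h_root ?_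
    rintro _ ⟨i, rfl⟩ l (hl : f (inl (Multiplicative.ofAdd l)) = g (inl (Multiplicative.ofAdd l)))
    have h_of : f (inr (of i)) = g (inr (of i)) := DFunLike.congr_fun h_inr (of i)
    have h_mem : exteriorRep n (of i) l ∈ W := by
      change f (inl (mulAutOfRepresentation (exteriorRep n) (of i) (Multiplicative.ofAdd l))) =
        g (inl (mulAutOfRepresentation (exteriorRep n) (of i) (Multiplicative.ofAdd l)))
      simp only [inl_aut, map_mul, map_inv, h_of, hl]
    have h_sub : mulLeft (Pi.single i 1, 0) l = exteriorRep n (of i) l - l := by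
      simp [exteriorRep_of]
    simpa [h_sub] using sub_mem h_mem hl
  refine SemidirectProduct.hom_ext (MonoidHom.ext fun l => ?_) h_inr
  exact (hW ▸ Submodule.mem_top : l.toAdd ∈ W)

end ExteriorSemidirect

theorem nonempty_mulEquiv_exteriorSemidirect (n : ℕ) :
    Nonempty (Burnside3 (n + 1) ≃* ExteriorSemidirect n) := by
  obtain ⟨Ψ, hΨ_root, hΨ_inr⟩ :=
    ExteriorSemidirect.exists_hom pow_three (lift pow_three (of ∘ Fin.succ)) (of (0 : Fin (n + 1)))
  let Θ : Burnside3 (n + 1) →* ExteriorSemidirect n :=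
    lift ExteriorSemidirect.pow_three (Fin.cons (ExteriorSemidirect.root n) fun i => inr (of i))
  have hΨ_of (i) : Ψ (inr (of i)) = of i.succ := by
    rw [← MonoidHom.comp_apply, hΨ_inr, lift_of, Function.comp_apply]
  have hΘ_zero : Θ (of 0) = ExteriorSemidirect.root n := lift_of _ _ _
  have hΘ_succ (i : Fin n) : Θ (of i.succ) = inr (of i) := lift_of _ _ _
  refine ⟨Θ.toMulEquiv Ψ (hom_ext fun i => ?_)
    (ExteriorSemidirect.hom_ext ?_ (hom_ext fun i => ?_))⟩
  · cases i using Fin.cases with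
    | zero => simp [hΘ_zero, hΨ_root]
    | succ i => simp [hΘ_succ, hΨ_of]
  · simp [hΨ_root, hΘ_zero]
  · simp [hΨ_of, hΘ_succ]

theorem card_succ (n : ℕ) :
    Nat.card (Burnside3 (n + 1)) = 3 ^ (1 + n + n.choose 2) * Nat.card (Burnside3 n) := by
  obtain ⟨e⟩ := nonempty_mulEquiv_exteriorSemidirect n
  have h_card : Nat.card (ExteriorModule n) = 3 ^ (1 + n + n.choose 2) := by
    rw [Module.natCard_eq_pow_finrank (K := ZMod 3), Nat.card_zmod, TruncatedExterior.finrank_eq,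
      Module.finrank_fin_fun]
  rw [Nat.card_congr e.toEquiv, SemidirectProduct.card, Nat.card_congr Multiplicative.toAdd, h_card]

theorem card (n : ℕ) : Nat.card (Burnside3 n) = 3 ^ (n + n.choose 2 + n.choose 3) := by
  induction n with
  | zero => simp
  | succ n ih =>
    rw [card_succ, ih, ← pow_add, Nat.choose_succ_succ n 1, Nat.choose_succ_succ n 2,
      Nat.choose_one_right]
    congr 1
    ring

end Burnside3

/-- For every `n ≥ 1`, the free Burnside group `B(n,3)` is finite, of cardinality
exactly `3 ^ (n + C(n,2) + C(n,3))`. -/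
theorem card_Burnside3 (n : ℕ) (hn : 1 ≤ n) :
    Finite (Burnside3 n) ∧
    Nat.card (Burnside3 n) = 3 ^ (n + n.choose 2 + n.choose 3) := by
  refine ⟨Nat.finite_of_card_ne_zero ?_, Burnside3.card n⟩
  rw [Burnside3.card]
  positivity
end

section
/- For the free Burnside group B(5,3) of exponent 3 on five generators: the fourth term γ₄(B(5,3)) of its lower central series is trivial, and the third term γ₃(B(5,3)) has cardinality exactly 3¹⁰. -/
/-- The free Burnside group `B(5,3)` of exponent 3 on five generators:
the free group on five generators modulo the normal closure of all cubes. -/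
abbrev B53 : Type :=
  FreeGroup (Fin 5) ⧸ Subgroup.normalClosure {w : FreeGroup (Fin 5) | ∃ v, w = v ^ 3}

/-!
In a group of exponent 3 every `x` satisfies `x · x^g · x^(g⁻¹) = 1`, so the conjugates of `x`
commute with each other and the group is 2-Engel: `⁅⁅x, y⁆, y⁆ = 1`. In a 2-Engel group
`⁅⁅x, y⁆, z⁆` is alternating in its three arguments (linearize the law at `y * z`), hence of order
dividing 3 by the Hall–Witt identity. Applying this to `⁅x, y⁆, z, u` shows that `⁅⁅x, y⁆, ⁅z, u⁆⁆`
is equal both to `⁅⁅⁅x, y⁆, z⁆, u⁆` and to its inverse, so `⁅⁅⁅x, y⁆, z⁆, u⁆` is trivial: this is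
Levi's theorem that 2-Engel groups have class at most 3. It follows that `γ₃` is generated by the
central elements `⁅⁅gᵢ, gⱼ⁆, gₖ⁆`, `i < j < k`, for any generating family `g`.

In the free Burnside group these elements are independent of order 3, because any three of the
generators can be mapped to a triple with nontrivial triple commutator in a group of exponent 3
while the other generators are mapped to `1`. Such a group is `Λ ⋊ (1 + J)`, where `Λ` is the
exterior algebra of the plane over `𝔽₃` and `J` its augmentation ideal: it has exponent 3 because
every `u ∈ 1 + J` satisfies `1 + u + u² = (u - 1)² = 0`.
-/

open scoped commutatorElement Quaternion

section Commutators

variable {G : Type*} [Group G]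

lemma commutator_mul_right_of_commute {a b c : G} (hab : Commute a b) (hacb : Commute ⁅a, c⁆ b) :
    ⁅a, b * c⁆ = ⁅a, c⁆ := by
  rw [commutatorElement_mul_right_eq_mul_conj, hab.commutator_eq, one_mul, ← hacb.eq,
    mul_inv_cancel_right]

lemma commutator_conj_right_of_commute {a b c : G} (hab : Commute a b) (hacb : Commute ⁅a, c⁆ b) :
    ⁅a, b * c * b⁻¹⁆ = ⁅a, c⁆ := by
  calc ⁅a, b * c * b⁻¹⁆ = ⁅b * a * b⁻¹, b * c * b⁻¹⁆ := by rw [← hab.eq, mul_inv_cancel_right]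
    _ = ⁅a, c⁆ := by rw [← conjugate_commutatorElement, ← hacb.eq, mul_inv_cancel_right]

lemma commutator_mem_of_closure_eq_top {K : Subgroup G} [K.Normal] {S : Set G}
    (hS : Subgroup.closure S = ⊤) {a : G} (ha : ∀ s ∈ S, ⁅a, s⁆ ∈ K) (g : G) : ⁅a, g⁆ ∈ K := by
  have hg : g ∈ Subgroup.closure S := hS ▸ Subgroup.mem_top g
  induction hg using Subgroup.closure_induction with
  | mem s hs => exact ha s hs
  | one => simp
  | mul b c _ _ hb hc =>
    rw [commutatorElement_mul_right_eq_mul_conj, mul_assoc, mul_assoc, ← mul_assoc b]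
    exact K.mul_mem hb (Subgroup.Normal.conj_mem ‹_› _ hc b)
  | inv b _ hb =>
    rw [commutatorElement_inv_right, ← commutatorElement_inv a b]
    simpa using Subgroup.Normal.conj_mem ‹_› _ (K.inv_mem hb) b⁻¹

lemma normal_of_le_center {K : Subgroup G} (hK : K ≤ Subgroup.center G) : K.Normal where
  conj_mem n hn g := by
    rwa [Subgroup.mem_center_iff.mp (hK hn) g, mul_inv_cancel_right]

lemma lowerCentralSeries_top_two_le_iff {K : Subgroup G} [K.Normal] :
    Subgroup.lowerCentralSeries ⊤ 2 ≤ K ↔ ∀ x y z : G, ⁅⁅x, y⁆, z⁆ ∈ K := by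
  refine ⟨fun h x y z ↦ h <| Subgroup.commutator_mem_commutator
    (Subgroup.commutator_mem_commutator trivial trivial) trivial, fun h ↦ ?_⟩
  have hγ₂ : ⁅(⊤ : Subgroup G), ⊤⁆ ≤ Subgroup.upperCentralSeriesStep K :=
    Subgroup.commutator_le.mpr fun x _ y _ ↦ h x y
  exact Subgroup.commutator_le.mpr fun g hg z _ ↦ hγ₂ hg z

end Commutators

/-- A group is 2-Engel if each `y` commutes with all commutators `⁅x, y⁆`; equivalently, every
element commutes with all of its conjugates. -/
def IsTwoEngel (G : Type*) [Group G] : Prop :=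
  ∀ x y : G, ⁅⁅x, y⁆, y⁆ = 1

namespace IsTwoEngel

variable {G : Type*} [Group G]

lemma of_pow_three_eq_one (hG : ∀ g : G, g ^ 3 = 1) : IsTwoEngel G := by
  have mul_conj_mul_conj (x g : G) : x * (g * x * g⁻¹) * (g⁻¹ * x * g) = 1 := by
    have hg : g⁻¹ * g⁻¹ = g := by
      rw [← mul_inv_rev, inv_eq_iff_mul_eq_one, ← pow_two, ← pow_succ, hG]
    calc x * (g * x * g⁻¹) * (g⁻¹ * x * g) = x * g * x * (g⁻¹ * g⁻¹) * x * g := by group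
      _ = (x * g) ^ 3 := by rw [hg, pow_three]; simp only [mul_assoc]
      _ = 1 := hG _
  intro x y
  have h : (x * y * x⁻¹) * (x⁻¹ * y * x) = y⁻¹ :=
    eq_inv_of_mul_eq_one_right (by simpa only [mul_assoc] using mul_conj_mul_conj y x)
  have h' : (x⁻¹ * y * x) * (x * y * x⁻¹) = y⁻¹ :=
    eq_inv_of_mul_eq_one_right (by simpa only [mul_assoc, inv_inv] using mul_conj_mul_conj y x⁻¹)
  have hconj : Commute (x * y * x⁻¹) y := by
    rw [← Commute.inv_right_iff, ← h]
    exact (Commute.refl _).mul_right (h.trans h'.symm)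
  exact ((hconj.mul_left (Commute.refl y).inv_left)).commutator_eq

variable (hG : IsTwoEngel G)
include hG

lemma commute_commutator_right (x y : G) : Commute ⁅x, y⁆ y :=
  commutatorElement_eq_one_iff_commute.mp (hG x y)

lemma commute_commutator_left (x y : G) : Commute ⁅x, y⁆ x := by
  simpa using (hG.commute_commutator_right y x).inv_left

lemma commute_conj (x g : G) : Commute (g * x * g⁻¹) x := by
  simpa [commutatorElement_def] using (hG.commute_commutator_right g x).mul_left (Commute.refl x)

lemma commutator_inv_left (x y : G) : ⁅x⁻¹, y⁆ = ⁅x, y⁆⁻¹ := by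
  rw [commutatorElement_inv_left, commutatorElement_inv, mul_assoc,
    (hG.commute_commutator_right y x).eq, inv_mul_cancel_left]

lemma commutator_swap_left (x y z : G) : ⁅⁅y, x⁆, z⁆ = ⁅⁅x, y⁆, z⁆⁻¹ := by
  rw [← hG.commutator_inv_left, commutatorElement_inv]

lemma commute_tripleCommutator_left (x y z : G) : Commute ⁅⁅x, y⁆, z⁆ x := by
  have h : ⁅⁅x, y⁆, z⁆ = ⁅x, y⁆ * ((z * y) * x * (z * y)⁻¹) * (z * x * z⁻¹)⁻¹ := by
    simp [commutatorElement_def, mul_assoc]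
  rw [h]
  exact ((hG.commute_commutator_left x y).mul_left (hG.commute_conj x _)).mul_left
    (hG.commute_conj x z).inv_left

lemma commute_tripleCommutator_middle (x y z : G) : Commute ⁅⁅x, y⁆, z⁆ y := by
  rw [hG.commutator_swap_left]
  exact (hG.commute_tripleCommutator_left y x z).inv_left

lemma commutator_swap_right (x y z : G) : ⁅⁅x, z⁆, y⁆ = ⁅⁅x, y⁆, z⁆⁻¹ := by
  have hxzy_x : Commute ⁅⁅x, z⁆, y⁆ x := hG.commute_tripleCommutator_left x z y
  have hxzy_z : Commute ⁅⁅x, z⁆, y⁆ z := hG.commute_tripleCommutator_middle x z y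
  have hxzy_y : Commute ⁅⁅x, z⁆, y⁆ y := hG.commute_commutator_right ⁅x, z⁆ y
  have hxzy_xy : Commute ⁅⁅x, z⁆, y⁆ ⁅x, y⁆ :=
    ((hxzy_x.mul_right hxzy_y).mul_right hxzy_x.inv_right).mul_right hxzy_y.inv_right
  have hxy : ⁅⁅x, y⁆, y * z⁆ = ⁅⁅x, y⁆, z⁆ :=
    commutator_mul_right_of_commute (hG.commute_commutator_right x y)
      (hG.commute_tripleCommutator_middle x y z)
  have hxz : ⁅y * ⁅x, z⁆ * y⁻¹, y * z⁆ = ⁅⁅x, z⁆, y⁆ := by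
    have hyz : y * z = y * (z * y) * y⁻¹ := by group
    rw [hyz, ← conjugate_commutatorElement,
      commutator_mul_right_of_commute (hG.commute_commutator_right x z) hxzy_z, ← hxzy_y.eq,
      mul_inv_cancel_right]
  refine eq_inv_of_mul_eq_one_left ?_
  -- Linearize the 2-Engel law at `y * z`.
  calc ⁅⁅x, z⁆, y⁆ * ⁅⁅x, y⁆, z⁆
      = ⁅x, y⁆ * ⁅y * ⁅x, z⁆ * y⁻¹, y * z⁆ * ⁅x, y⁆⁻¹ * ⁅⁅x, y⁆, y * z⁆ := by
        rw [hxz, hxy, ← hxzy_xy.eq, mul_inv_cancel_right]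
    _ = ⁅⁅x, y⁆ * (y * ⁅x, z⁆ * y⁻¹), y * z⁆ :=
        (commutatorElement_mul_left_eq_conj_mul _ _ _).symm
    _ = ⁅⁅x, y * z⁆, y * z⁆ := by
        rw [commutatorElement_mul_right_eq_mul_conj x]
        simp only [mul_assoc]
    _ = 1 := hG x (y * z)

lemma commutator_rotate (x y z : G) : ⁅⁅y, z⁆, x⁆ = ⁅⁅x, y⁆, z⁆ := by
  rw [hG.commutator_swap_right, hG.commutator_swap_left, inv_inv]

lemma commutator_commutator_right (x y z : G) : ⁅x, ⁅y, z⁆⁆ = ⁅⁅x, y⁆, z⁆⁻¹ := by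
  rw [← commutatorElement_inv, hG.commutator_rotate]

lemma commutator_commutator_pow_three (x y z : G) : ⁅⁅x, y⁆, z⁆ ^ 3 = 1 := by
  have conj_right (a b c : G) : ⁅⁅a, b⁆, b * c * b⁻¹⁆ = ⁅⁅a, b⁆, c⁆ :=
    commutator_conj_right_of_commute (hG.commute_commutator_right a b)
      (hG.commute_tripleCommutator_middle a b c)
  have hallWitt := commutatorElement_commutatorElement_conj_mul x y z
  rw [conj_right, conj_right, conj_right, hG.commutator_rotate x y z,
    ← hG.commutator_rotate z x y] at hallWitt
  rw [pow_three', hallWitt]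

lemma commutator_commutator_commutator_eq_one (x y z u : G) : ⁅⁅⁅x, y⁆, z⁆, u⁆ = 1 := by
  have hinv : ⁅⁅x, y⁆, ⁅z, u⁆⁆ = ⁅⁅⁅x, y⁆, z⁆, u⁆⁻¹ := hG.commutator_commutator_right ⁅x, y⁆ z u
  have hself : ⁅⁅x, y⁆, ⁅z, u⁆⁆ = ⁅⁅⁅x, y⁆, z⁆, u⁆ := by
    calc ⁅⁅x, y⁆, ⁅z, u⁆⁆ = ⁅⁅⁅z, u⁆, x⁆, y⁆ := hG.commutator_rotate ⁅z, u⁆ x y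
      _ = ⁅⁅⁅x, z⁆, u⁆, y⁆ := by rw [hG.commutator_rotate x z u]
      _ = ⁅⁅⁅x, z⁆, y⁆, u⁆⁻¹ := hG.commutator_swap_right ⁅x, z⁆ y u
      _ = ⁅⁅⁅x, y⁆, z⁆, u⁆ := by
        rw [hG.commutator_swap_right x y z, hG.commutator_inv_left, inv_inv]
  have hsq : ⁅⁅⁅x, y⁆, z⁆, u⁆ * ⁅⁅⁅x, y⁆, z⁆, u⁆ = 1 :=
    mul_eq_one_iff_eq_inv.mpr (hself.symm.trans hinv)
  simpa [pow_three, hsq] using hG.commutator_commutator_pow_three ⁅x, y⁆ z u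

lemma commutator_commutator_mem_center (x y z : G) : ⁅⁅x, y⁆, z⁆ ∈ Subgroup.center G :=
  Subgroup.mem_center_iff.mpr fun u ↦ (commutatorElement_eq_one_iff_mul_comm.mp
    (hG.commutator_commutator_commutator_eq_one x y z u)).symm

theorem lowerCentralSeries_three_eq_bot : Subgroup.lowerCentralSeries (⊤ : Subgroup G) 3 = ⊥ :=
  Subgroup.commutator_top_right_eq_bot_iff_le_center.mpr <|
    lowerCentralSeries_top_two_le_iff.mpr hG.commutator_commutator_mem_center

lemma commutator_commutator_mem_of_closure_eq_top {K : Subgroup G} [K.Normal] {S : Set G}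
    (hS : Subgroup.closure S = ⊤) (hK : ∀ x ∈ S, ∀ y ∈ S, ∀ z ∈ S, ⁅⁅x, y⁆, z⁆ ∈ K) (x y z : G) :
    ⁅⁅x, y⁆, z⁆ ∈ K := by
  have extend {x y : G} : (∀ s ∈ S, ⁅⁅x, y⁆, s⁆ ∈ K) → ∀ z, ⁅⁅x, y⁆, z⁆ ∈ K :=
    commutator_mem_of_closure_eq_top hS
  have hSSG : ∀ x ∈ S, ∀ y ∈ S, ∀ z, ⁅⁅x, y⁆, z⁆ ∈ K :=
    fun x hx y hy ↦ extend (hK x hx y hy)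
  have hSGG : ∀ x ∈ S, ∀ y z, ⁅⁅x, y⁆, z⁆ ∈ K := fun x hx y ↦ extend fun z hz ↦ by
    rw [hG.commutator_swap_right]
    exact K.inv_mem (hSSG x hx z hz y)
  refine extend (fun z hz ↦ ?_) z
  rw [hG.commutator_rotate z x y]
  exact hSGG z hz x y

end IsTwoEngel

/-- The left-normed commutator of three elements, indexed by `Fin 3` so that permutations act. -/
def tripleCommutator {G : Type*} [Group G] (v : Fin 3 → G) : G := ⁅⁅v 0, v 1⁆, v 2⁆

lemma map_tripleCommutator {G H : Type*} [Group G] [Group H] (f : G →* H) (v : Fin 3 → G) :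
    f (tripleCommutator v) = tripleCommutator (f ∘ v) := by
  simp [tripleCommutator]

lemma tripleCommutator_eq_one_of_apply_eq_one {G : Type*} [Group G] {v : Fin 3 → G} (i : Fin 3)
    (hi : v i = 1) : tripleCommutator v = 1 := by
  fin_cases i <;> simp_all [tripleCommutator]

namespace IsTwoEngel

variable {G : Type*} [Group G] (hG : IsTwoEngel G)
include hG

lemma tripleCommutator_comp_swap (v : Fin 3 → G) {i j : Fin 3} (hij : i ≠ j) :
    tripleCommutator (v ∘ Equiv.swap i j) = (tripleCommutator v)⁻¹ := by
  have h₀₁ : tripleCommutator (v ∘ Equiv.swap 0 1) = (tripleCommutator v)⁻¹ :=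
    hG.commutator_swap_left (v 0) (v 1) (v 2)
  have h₁₂ : tripleCommutator (v ∘ Equiv.swap 1 2) = (tripleCommutator v)⁻¹ :=
    hG.commutator_swap_right (v 0) (v 1) (v 2)
  have h₀₂ : tripleCommutator (v ∘ Equiv.swap 0 2) = (tripleCommutator v)⁻¹ :=
    (hG.commutator_rotate (v 2) (v 1) (v 0)).symm.trans (hG.commutator_swap_left (v 0) (v 1) (v 2))
  fin_cases i <;> fin_cases j <;> first
    | exact absurd rfl hij
    | assumption

lemma tripleCommutator_comp_perm (v : Fin 3 → G) (σ : Equiv.Perm (Fin 3)) :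
    tripleCommutator (v ∘ σ) = tripleCommutator v ^ (σ.sign : ℤ) := by
  induction σ using Equiv.Perm.swap_induction_on' with
  | one => simp
  | mul_swap σ i j hij h =>
    rw [Equiv.Perm.coe_mul, ← Function.comp_assoc, hG.tripleCommutator_comp_swap _ hij, h,
      map_mul, Equiv.Perm.sign_swap hij]
    simp

lemma tripleCommutator_eq_one_of_not_injective {v : Fin 3 → G} (hv : ¬ v.Injective) :
    tripleCommutator v = 1 := by
  obtain ⟨i, j, hvij, hij⟩ := Function.not_injective_iff.mp hv
  have hswap : v ∘ Equiv.swap i j = v := by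
    rw [Equiv.comp_swap_eq_update, hvij, Function.update_eq_self, ← hvij, Function.update_eq_self]
  have hinv : tripleCommutator v = (tripleCommutator v)⁻¹ := by
    simpa only [hswap] using hG.tripleCommutator_comp_swap v hij
  have hcube : tripleCommutator v ^ 3 = 1 := hG.commutator_commutator_pow_three _ _ _
  rwa [pow_succ, pow_two, mul_eq_one_iff_eq_inv.mpr hinv, one_mul] at hcube

variable {ι : Type*} [LinearOrder ι] {g : ι → G}

lemma tripleCommutator_mem_iSup_zpowers (t : Fin 3 → ι) :
    tripleCommutator (g ∘ t) ∈ ⨆ s : Fin 3 ↪o ι, Subgroup.zpowers (tripleCommutator (g ∘ s)) := by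
  by_cases ht : t.Injective
  · have hmono : StrictMono (t ∘ Tuple.sort t) :=
      (Tuple.monotone_sort t).strictMono_of_injective (ht.comp (Tuple.sort t).injective)
    have hsort : tripleCommutator (g ∘ t ∘ Tuple.sort t) ∈
        ⨆ s : Fin 3 ↪o ι, Subgroup.zpowers (tripleCommutator (g ∘ s)) :=
      Subgroup.mem_iSup_of_mem (OrderEmbedding.ofStrictMono _ hmono) (Subgroup.mem_zpowers _)
    have hunsort : g ∘ t = (g ∘ t ∘ Tuple.sort t) ∘ (Tuple.sort t).symm := by
      funext i
      simp
    rw [hunsort, hG.tripleCommutator_comp_perm]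
    exact Subgroup.zpow_mem _ hsort _
  · rw [hG.tripleCommutator_eq_one_of_not_injective fun h ↦ ht h.of_comp]
    exact one_mem _

theorem lowerCentralSeries_two_eq_iSup_zpowers (hg : Subgroup.closure (Set.range g) = ⊤) :
    Subgroup.lowerCentralSeries (⊤ : Subgroup G) 2 =
      ⨆ s : Fin 3 ↪o ι, Subgroup.zpowers (tripleCommutator (g ∘ s)) := by
  have hcenter : ⨆ s : Fin 3 ↪o ι, Subgroup.zpowers (tripleCommutator (g ∘ s)) ≤
      Subgroup.center G :=
    iSup_le fun s ↦ Subgroup.zpowers_le.mpr (hG.commutator_commutator_mem_center _ _ _)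
  have := normal_of_le_center hcenter
  apply le_antisymm
  · refine lowerCentralSeries_top_two_le_iff.mpr
      (hG.commutator_commutator_mem_of_closure_eq_top hg ?_)
    rintro _ ⟨i, rfl⟩ _ ⟨j, rfl⟩ _ ⟨k, rfl⟩
    exact hG.tripleCommutator_mem_iSup_zpowers ![i, j, k]
  · exact iSup_le fun s ↦ Subgroup.zpowers_le.mpr
      (lowerCentralSeries_top_two_le_iff.mp le_rfl _ _ _)

end IsTwoEngel

section IndependentSubgroups

variable {G ι : Type*} [Group G]

lemma iSupIndep_of_disjoint_ker {H : ι → Type*} [∀ i, Group (H i)] {K : ι → Subgroup G}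
    (f : ∀ i, G →* H i) (hdisj : ∀ i, Disjoint (K i) (f i).ker)
    (hker : ∀ i j, j ≠ i → K j ≤ (f i).ker) : iSupIndep K :=
  fun i ↦ (hdisj i).mono_right (iSup₂_le (hker i))

lemma disjoint_zpowers_ker {H : Type*} [Group H] {p : ℕ} [Fact p.Prime] {c : G} (hc : c ^ p = 1)
    {f : G →* H} (hf : f c ≠ 1) : Disjoint (Subgroup.zpowers c) f.ker := by
  have horder : orderOf (f c) = p := orderOf_eq_prime (by rw [← map_pow, hc, map_one]) hf
  rw [Subgroup.disjoint_def]
  rintro _ ⟨n, rfl⟩ hn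
  obtain ⟨m, rfl⟩ : (p : ℤ) ∣ n := by
    rwa [← horder, orderOf_dvd_iff_zpow_eq_one, ← map_zpow]
  simp only [zpow_mul, zpow_natCast, hc, one_zpow]

lemma card_iSup_of_iSupIndep [Fintype ι] {K : ι → Subgroup G}
    (hcomm : Pairwise fun i j ↦ ∀ x y, x ∈ K i → y ∈ K j → Commute x y) (hind : iSupIndep K) :
    Nat.card (⨆ i, K i : Subgroup G) = ∏ i, Nat.card (K i) := by
  have hinj := Subgroup.injective_noncommPiCoprod_of_iSupIndep (hcomm := hcomm) hind
  rw [← Subgroup.noncommPiCoprod_range (hcomm := hcomm),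
    ← Nat.card_congr (MonoidHom.ofInjective hinj).toEquiv, Nat.card_pi]

lemma card_iSup_zpowers [Finite ι] {H : ι → Type*} [∀ i, Group (H i)] {p : ℕ} [Fact p.Prime]
    {c : ι → G} (hcomm : ∀ i j, Commute (c i) (c j)) (hpow : ∀ i, c i ^ p = 1)
    (f : ∀ i, G →* H i) (hne : ∀ i, f i (c i) ≠ 1) (hone : ∀ i j, j ≠ i → f i (c j) = 1) :
    Nat.card (⨆ i, Subgroup.zpowers (c i) : Subgroup G) = p ^ Nat.card ι := by
  have := Fintype.ofFinite ι
  have hcard (i : ι) : Nat.card (Subgroup.zpowers (c i)) = p := by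
    rw [Nat.card_zpowers]
    exact orderOf_eq_prime (hpow i) fun h ↦ hne i (by rw [h, map_one])
  have hind : iSupIndep fun i ↦ Subgroup.zpowers (c i) :=
    iSupIndep_of_disjoint_ker f (fun i ↦ disjoint_zpowers_ker (hpow i) (hne i))
      fun i j hij ↦ Subgroup.zpowers_le.mpr (hone i j hij)
  rw [card_iSup_of_iSupIndep _ hind, Finset.prod_congr rfl fun i _ ↦ hcard i, Finset.prod_const,
    Finset.card_univ, Nat.card_eq_fintype_card]
  rintro i j - _ _ ⟨m, rfl⟩ ⟨n, rfl⟩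
  exact ((hcomm i j).zpow_left m).zpow_right n

end IndependentSubgroups

section SemidirectProduct

variable {N G : Type*} [Group N] [Group G] {φ : G →* MulAut N}

lemma semidirectProduct_pow_three_eq_one {x : N ⋊[φ] G}
    (hleft : x.left * φ x.right x.left * φ (x.right ^ 2) x.left = 1) (hright : x.right ^ 3 = 1) :
    x ^ 3 = 1 := by
  ext
  · simpa [pow_three', pow_two, mul_assoc] using hleft
  · simpa [pow_three'] using hright

lemma commutator_inl_inr (n : N) (g : G) :
    ⁅(SemidirectProduct.inl n : N ⋊[φ] G), (SemidirectProduct.inr g : N ⋊[φ] G)⁆ =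
      SemidirectProduct.inl (n * φ g n⁻¹) := by
  rw [map_mul, SemidirectProduct.inl_aut, commutatorElement_def, map_inv, map_inv]
  simp only [mul_assoc]

end SemidirectProduct

/-- The exterior algebra `Λ` of the plane over `𝔽₃`, realised as the degenerate quaternion algebra
with `i² = j² = 0` and `k = ij = -ji`. -/
abbrev ExteriorPlane : Type := ℍ[ZMod 3, 0, 0, 0]

namespace ExteriorPlane

/-- The projection of `Λ` onto its degree-zero part. -/
def augmentation : ExteriorPlane →+* ZMod 3 where
  toFun x := x.re
  map_one' := rfl
  map_mul' x y := by simp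
  map_zero' := rfl
  map_add' _ _ := rfl

lemma sq_eq_zero {x : ExteriorPlane} (hx : augmentation x = 0) : x ^ 2 = 0 := by
  replace hx : x.re = 0 := hx
  rw [pow_two]
  ext <;> simp [hx]
  ring

lemma one_add_add_sq_eq_zero {x : ExteriorPlane} (hx : augmentation x = 1) :
    1 + x + x ^ 2 = 0 := by
  have hthree : (3 : ExteriorPlane) = 0 :=
    (map_ofNat (algebraMap (ZMod 3) ExteriorPlane) 3).symm.trans (map_zero _)
  calc 1 + x + x ^ 2 = (x - 1) ^ 2 + 3 * x := by noncomm_ring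
    _ = 0 := by rw [sq_eq_zero (by rw [map_sub, hx, map_one, sub_self]), hthree, zero_mul, add_zero]

lemma pow_three_eq_one {x : ExteriorPlane} (hx : augmentation x = 1) : x ^ 3 = 1 := by
  refine sub_eq_zero.mp ?_
  calc x ^ 3 - 1 = (x - 1) * (1 + x + x ^ 2) := by noncomm_ring
    _ = 0 := by rw [one_add_add_sq_eq_zero hx, mul_zero]

/-- The group `1 + J` of units of `Λ`, where `J` is the augmentation ideal. -/
def unipotentUnits : Subgroup ExteriorPlaneˣ :=
  (Units.map (augmentation : ExteriorPlane →* ZMod 3)).ker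

lemma augmentation_unipotentUnits (u : unipotentUnits) :
    augmentation (u : ExteriorPlaneˣ) = 1 :=
  congrArg Units.val (MonoidHom.mem_ker.mp u.2)

/-- An element of `1 + J` as a unit of `Λ`. -/
def unipotentUnit (x : ExteriorPlane) (hx : augmentation x = 1) : unipotentUnits :=
  ⟨Units.ofPowEqOne x 3 (pow_three_eq_one hx) three_ne_zero, Units.ext hx⟩

/-- The action of `1 + J` on the additive group of `Λ` by left multiplication. -/
def mulLeft : unipotentUnits →* MulAut (Multiplicative ExteriorPlane) :=
  ((MulAutMultiplicative ExteriorPlane).symm.toMonoidHom.comp AddAut.mulLeft).comp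
    unipotentUnits.subtype

lemma mulLeft_ofAdd (u : unipotentUnits) (x : ExteriorPlane) :
    mulLeft u (Multiplicative.ofAdd x) = Multiplicative.ofAdd ((u : ExteriorPlaneˣ) * x) := rfl

lemma semidirectProduct_mulLeft_pow_three_eq_one
    (g : Multiplicative ExteriorPlane ⋊[mulLeft] unipotentUnits) : g ^ 3 = 1 := by
  have haug := augmentation_unipotentUnits g.right
  refine semidirectProduct_pow_three_eq_one ?_ ?_
  · obtain ⟨x, hx⟩ := Multiplicative.ofAdd.surjective g.left
    simp only [← hx, mulLeft_ofAdd, ← ofAdd_add]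
    refine congrArg Multiplicative.ofAdd ?_
    simpa [add_mul] using congrArg (· * x) (one_add_add_sq_eq_zero haug)
  · ext1
    ext1
    exact pow_three_eq_one haug

lemma tripleCommutator_inl_one_inr_inr (u w : unipotentUnits) :
    tripleCommutator ![(.inl (.ofAdd 1) : Multiplicative ExteriorPlane ⋊[mulLeft] unipotentUnits),
      .inr u, .inr w] =
      .inl (.ofAdd ((1 - (w : ExteriorPlaneˣ)) * (1 - (u : ExteriorPlaneˣ)))) := by
  simp only [tripleCommutator, Matrix.cons_val, commutator_inl_inr, ← ofAdd_neg, mulLeft_ofAdd,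
    ← ofAdd_add]
  congr 2
  noncomm_ring

end ExteriorPlane

open ExteriorPlane in
theorem exists_pow_three_eq_one_tripleCommutator_ne_one :
    ∃ (H : Type) (_ : Group H) (v : Fin 3 → H), (∀ h : H, h ^ 3 = 1) ∧ tripleCommutator v ≠ 1 := by
  let i : ExteriorPlane := ⟨0, 1, 0, 0⟩
  let j : ExteriorPlane := ⟨0, 0, 1, 0⟩
  let u : unipotentUnits := unipotentUnit (1 + i) rfl
  let w : unipotentUnits := unipotentUnit (1 + j) rfl
  refine ⟨_, _, ![.inl (.ofAdd 1), .inr u, .inr w], semidirectProduct_mulLeft_pow_three_eq_one,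
    fun h ↦ ?_⟩
  rw [tripleCommutator_inl_one_inr_inr, ← map_one SemidirectProduct.inl, SemidirectProduct.inl_inj,
    ofAdd_eq_one] at h
  have hji : (1 - (1 + j)) * (1 - (1 + i)) = ⟨0, 0, 0, -1⟩ := by
    ext <;> simp [i, j]
  exact absurd (congrArg QuaternionAlgebra.imK (hji.symm.trans h)) (by decide)

lemma exists_apply_notMem_range_of_ne {ι : Type*} [LinearOrder ι] {n : ℕ} {s t : Fin n ↪o ι}
    (hst : s ≠ t) : ∃ m, s m ∉ Set.range t := by
  obtain ⟨_, hs, ht⟩ := (Set.powersetCard.exists_mem_notMem_iff_ne _ _).mp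
    (Set.powersetCard.ofFinEmbEquiv.injective.ne hst)
  obtain ⟨m, rfl⟩ := (Set.powersetCard.mem_ofFinEmbEquiv_iff_mem_range _ _).mp hs
  exact ⟨m, mt (Set.powersetCard.mem_ofFinEmbEquiv_iff_mem_range _ _).mpr ht⟩

/-- The free Burnside group `B(ι, n)` of exponent `n`, with `ι` indexing the free generators. -/
abbrev FreeBurnside (ι : Type*) (n : ℕ) : Type _ :=
  FreeGroup ι ⧸ Subgroup.normalClosure {w : FreeGroup ι | ∃ v, w = v ^ n}

namespace FreeBurnside

section UniversalProperty

variable {ι : Type*} {n : ℕ}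

lemma pow_eq_one (g : FreeBurnside ι n) : g ^ n = 1 := by
  obtain ⟨v, rfl⟩ := QuotientGroup.mk_surjective g
  exact (QuotientGroup.eq_one_iff _).mpr (Subgroup.subset_normalClosure ⟨v, rfl⟩)

/-- The canonical generators of `B(ι, n)`. -/
def of (i : ι) : FreeBurnside ι n := QuotientGroup.mk (FreeGroup.of i)

lemma closure_range_of : Subgroup.closure (Set.range (of : ι → FreeBurnside ι n)) = ⊤ := by
  have hmap := MonoidHom.map_closure
    (QuotientGroup.mk' (Subgroup.normalClosure {w : FreeGroup ι | ∃ v, w = v ^ n}))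
    (Set.range FreeGroup.of)
  rw [FreeGroup.closure_range_of, ← MonoidHom.range_eq_map, QuotientGroup.range_mk',
    ← Set.range_comp] at hmap
  exact hmap.symm

variable {H : Type*} [Group H]

/-- The homomorphism from `B(ι, n)` to a group of exponent dividing `n` with prescribed values on
the generators. -/
def lift (hH : ∀ h : H, h ^ n = 1) (f : ι → H) : FreeBurnside ι n →* H :=
  QuotientGroup.lift _ (FreeGroup.lift f) <| Subgroup.normalClosure_le_normal <| by
    rintro _ ⟨v, rfl⟩
    rw [SetLike.mem_coe, MonoidHom.mem_ker, map_pow, hH]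

lemma lift_of (hH : ∀ h : H, h ^ n = 1) (f : ι → H) (i : ι) : lift hH f (of i) = f i :=
  FreeGroup.lift_apply_of

end UniversalProperty

variable {ι : Type*}

lemma isTwoEngel : IsTwoEngel (FreeBurnside ι 3) := .of_pow_three_eq_one pow_eq_one

theorem card_lowerCentralSeries_two [LinearOrder ι] [Finite ι] :
    Nat.card (Subgroup.lowerCentralSeries (⊤ : Subgroup (FreeBurnside ι 3)) 2) =
      3 ^ (Nat.card ι).choose 3 := by
  obtain ⟨H, _, v, hH, hv⟩ := exists_pow_three_eq_one_tripleCommutator_ne_one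
  let detect (t : Fin 3 ↪o ι) : FreeBurnside ι 3 →* H := lift hH (Function.extend t v 1)
  have map_detect (t s : Fin 3 ↪o ι) : detect t (tripleCommutator (of ∘ s)) =
      tripleCommutator (Function.extend t v 1 ∘ s) := by
    rw [map_tripleCommutator]
    exact congrArg tripleCommutator (funext fun m ↦ lift_of hH _ (s m))
  have detect_self (t : Fin 3 ↪o ι) : detect t (tripleCommutator (of ∘ t)) ≠ 1 := by
    rwa [map_detect, Function.extend_comp t.injective]
  have detect_ne (t s : Fin 3 ↪o ι) (hst : s ≠ t) : detect t (tripleCommutator (of ∘ s)) = 1 := by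
    obtain ⟨m, hm⟩ := exists_apply_notMem_range_of_ne hst
    rw [map_detect]
    exact tripleCommutator_eq_one_of_apply_eq_one m (Function.extend_apply' _ _ _ hm)
  have hcomm (s t : Fin 3 ↪o ι) : Commute (tripleCommutator (of ∘ s))
      (tripleCommutator (of ∘ t) : FreeBurnside ι 3) :=
    (Subgroup.mem_center_iff.mp (isTwoEngel.commutator_commutator_mem_center _ _ _) _).symm
  have := DFunLike.finite (Fin 3 ↪o ι)
  rw [isTwoEngel.lowerCentralSeries_two_eq_iSup_zpowers closure_range_of,
    card_iSup_zpowers hcomm (fun _ ↦ pow_eq_one _) detect detect_self detect_ne,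
    Nat.card_congr Set.powersetCard.ofFinEmbEquiv, Set.powersetCard.card]

end FreeBurnside

theorem B53_gamma_general (ι : Type*) [Finite ι] :
    Subgroup.lowerCentralSeries (⊤ : Subgroup (FreeBurnside ι 3)) 3 = ⊥ ∧
    Nat.card (Subgroup.lowerCentralSeries (⊤ : Subgroup (FreeBurnside ι 3)) 2) =
      3 ^ (Nat.card ι).choose 3 := by
  let := IsWellOrder.linearOrder (WellOrderingRel (α := ι))
  exact ⟨FreeBurnside.isTwoEngel.lowerCentralSeries_three_eq_bot,
    FreeBurnside.card_lowerCentralSeries_two⟩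

/-- For `B(5,3)`: the fourth term `γ₄` of the lower central series is trivial
(Mathlib: `lowerCentralSeries B53 3 = ⊥`, since `γ₁` has index `0`), and the third
term `γ₃` (Mathlib: `lowerCentralSeries B53 2`) has cardinality exactly `3¹⁰`. -/
theorem B53_gamma :
    Subgroup.lowerCentralSeries (⊤ : Subgroup B53) 3 = ⊥ ∧
    Nat.card (Subgroup.lowerCentralSeries (⊤ : Subgroup B53) 2) = 3 ^ 10 := by
  simpa [Nat.choose] using B53_gamma_general (Fin 5)
end
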